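/- Let G be a finite Frobenius group with Frobenius kernel K and Frobenius complement H, suppose G has perfect order classes, and suppose H is not nilpotent and every prime divisor of |H| is 2 or q, where q is an odd prime. Then q = 3 or q = 5, and K is a homocyclic p-group (for some odd prime p) of rank 2 or of rank 4. -/

import Mathlib

/-- The number of elements of order `n` in the group `G`. -/
noncomputable def orderCount (G : Type*) [Group G] (n : ℕ) : ℕ :=
  Nat.card {g : G // orderOf g = n}

/-- A group has *perfect order classes* if, for every positive integer `n`, the number of
elements of order `n` is either zero or a divisor of the order of the group. -/
def PerfectOrderClasses (G : Type*) [Group G] : Prop :=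
  ∀ n : ℕ, 0 < n → orderCount G n = 0 ∨ orderCount G n ∣ Nat.card G

/-- `G` is a Frobenius group with Frobenius kernel `K` and Frobenius complement `H`:
`K` is a nontrivial proper normal subgroup, `H` a subgroup with `K ⊓ H = ⊥` and `KH = G`,
and the conjugation action of `H` on `K` is fixed-point-free. -/
def IsFrobeniusWith {G : Type*} [Group G] (K H : Subgroup G) : Prop :=
  K ≠ ⊥ ∧ K ≠ ⊤ ∧ K.Normal ∧ K ⊓ H = ⊥ ∧
    (∀ g : G, ∃ k ∈ K, ∃ h ∈ H, g = k * h) ∧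
    ∀ h ∈ H, h ≠ 1 → ∀ k ∈ K, k ≠ 1 → h * k * h⁻¹ ≠ k

/-!
Since `|H|` is even, an involution of `H` inverts the kernel `K`, so `K` is abelian. `H` permutes
freely the elements of each order `n > 1` of `K`, so `|H|` divides their number, which divides
`|K| |H|`. Counting elements of order `p * l` for distinct primes `p` and `l` shows that `K` is a
`p`-group; then `H` is regular on the elements of order `p`, which makes all cyclic factors of `K`
isomorphic. So `K` is homocyclic of some rank `r`, with `|H| = p ^ r - 1`, and `r ≥ 2` because the
automorphism group of a cyclic group is abelian.

For `h ≠ 1` in `H` all elements of the coset `K h` are conjugate to `h`, so `H` itself has perfect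
order classes and `q - 1` divides `|H|`. It remains to solve an arithmetic problem: `p ^ r - 1` has
no prime divisors other than `2` and `q`, and is divisible by `q` and by `q - 1`.
-/

section NumberTheory

theorem odd_geom_sum {R : Type*} [Semiring R] {x : R} {n : ℕ} (hx : Odd x) (hn : Odd n) :
    Odd (∑ i ∈ Finset.range n, x ^ i) := by
  obtain ⟨m, rfl⟩ := hn
  induction m with
  | zero => simp
  | succ m ih =>
    rw [show 2 * (m + 1) + 1 = 2 * m + 1 + 1 + 1 by ring, Finset.sum_range_succ,
      Finset.sum_range_succ]
    exact (ih.add_odd hx.pow).add_odd hx.pow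

theorem exists_eq_pow_of_primeFactors_subset_pair {a b n : ℕ} (hn : n ≠ 0)
    (h : n.primeFactors ⊆ {a, b}) (hb : ¬ b ∣ n) : ∃ c, n = a ^ c := by
  refine ⟨_, Nat.eq_prime_pow_of_unique_prime_dvd hn fun {l} hl hln => ?_⟩
  have hlab : l = a ∨ l = b := by simpa using h (Nat.mem_primeFactors.2 ⟨hl, hln, hn⟩)
  exact hlab.resolve_right fun hlb => hb (hlb ▸ hln)

/-- Here `x ^ s - 1` is `x - 1` times a sum of `s` odd terms, so that sum is `±1`. -/
theorem eq_one_of_natAbs_pow_sub_one_eq_two_pow {x : ℤ} {s c : ℕ} (hx : Odd x)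
    (hx1 : 1 < x.natAbs) (hs : Odd s) (h : (x ^ s - 1).natAbs = 2 ^ c) : s = 1 := by
  have hfac : (∑ i ∈ Finset.range s, x ^ i).natAbs * (x - 1).natAbs = (x ^ s - 1).natAbs := by
    rw [← Int.natAbs_mul, geom_sum_mul]
  have hsum : (∑ i ∈ Finset.range s, x ^ i).natAbs = 1 :=
    Nat.Coprime.eq_one_of_dvd
      ((Nat.coprime_two_right.2 (Int.natAbs_odd.2 (odd_geom_sum hx hs))).pow_right c)
      (h ▸ hfac ▸ dvd_mul_right _ _)
  rw [hsum, one_mul] at hfac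
  by_contra hs1
  have hpow : x.natAbs ^ 3 ≤ (x ^ s).natAbs := by
    rw [Int.natAbs_pow]
    exact Nat.pow_le_pow_right (by omega) (by obtain ⟨t, rfl⟩ := hs; omega)
  have hcube : 4 * x.natAbs ≤ x.natAbs ^ 3 := by
    rw [pow_succ]
    gcongr
    nlinarith
  omega

theorem eq_one_of_pow_add_one_eq_two_pow {x s c : ℕ} (hx : Odd x) (hx1 : 1 < x) (hs : s ≠ 0)
    (h : x ^ s + 1 = 2 ^ c) : s = 1 := by
  rcases Nat.even_or_odd s with ⟨t, rfl⟩ | hodd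
  · have hmod : (x ^ t) ^ 2 % 4 = 1 := by
      obtain ⟨y, hy⟩ : Odd (x ^ t) := hx.pow
      rw [hy, show (2 * y + 1) ^ 2 = 4 * (y ^ 2 + y) + 1 by ring, Nat.mul_add_mod]
    have hlt : 1 < x ^ (t + t) := Nat.one_lt_pow hs hx1
    rw [← pow_mul, mul_two] at hmod
    rcases c with _ | _ | c
    · omega
    · omega
    · rw [pow_succ, pow_succ] at h
      omega
  · refine eq_one_of_natAbs_pow_sub_one_eq_two_pow (x := -x) (c := c) (by simpa using hx)
      (by simpa using hx1) hodd ?_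
    have hneg : (-x : ℤ) ^ s - 1 = -((2 ^ c : ℕ) : ℤ) := by
      rw [← h, hodd.neg_pow]
      push_cast
      ring
    rw [hneg, Int.natAbs_neg, Int.natAbs_natCast]

theorem eq_three_of_sq_eq_two_pow_add_one {x c : ℕ} (hx : 1 < x) (h : x ^ 2 = 2 ^ c + 1) :
    x = 3 := by
  obtain ⟨y, rfl⟩ : ∃ y, x = y + 1 := ⟨x - 1, by omega⟩
  have hprod : y * (y + 2) = 2 ^ c := by linarith
  obtain ⟨a, -, ha⟩ := (Nat.dvd_prime_pow Nat.prime_two).1 (Dvd.intro _ hprod)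
  obtain ⟨b, -, hb⟩ := (Nat.dvd_prime_pow Nat.prime_two).1 (Dvd.intro_left _ hprod)
  have hab : a ≤ b := (Nat.pow_le_pow_iff_right Nat.one_lt_two).1 (by omega)
  have hy : y ∣ 2 := (Nat.dvd_add_right dvd_rfl).1 (by rw [hb, ha]; exact pow_dvd_pow 2 hab)
  rcases (Nat.dvd_prime Nat.prime_two).1 hy with rfl | rfl
  · have : 3 ∣ 2 := Nat.prime_three.dvd_of_dvd_pow (hprod ▸ by norm_num : 3 ∣ 2 ^ c)
    omega
  · rfl

theorem eq_one_or_of_pow_eq_two_pow_add_one {x s c : ℕ} (hx : Odd x) (hx1 : 1 < x) (hs : s ≠ 0)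
    (h : x ^ s = 2 ^ c + 1) : s = 1 ∨ x = 3 ∧ s = 2 := by
  rcases Nat.even_or_odd s with ⟨t, rfl⟩ | hodd
  · right
    have ht : t ≠ 0 := by omega
    have hxt : x ^ t = 3 ^ 1 := eq_three_of_sq_eq_two_pow_add_one (Nat.one_lt_pow ht hx1)
      (by rw [← pow_mul, mul_two, h])
    have hx3 : x ∣ 3 := by simpa [hxt] using dvd_pow_self x ht
    obtain rfl : x = 3 := ((Nat.dvd_prime Nat.prime_three).1 hx3).resolve_left hx1.ne'
    have := Nat.pow_right_injective le_add_self hxt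
    omega
  · left
    refine eq_one_of_natAbs_pow_sub_one_eq_two_pow (x := x) (c := c) (by simpa using hx)
      (by simpa using hx1) hodd ?_
    have hsub : (x : ℤ) ^ s - 1 = ((2 ^ c : ℕ) : ℤ) := by
      rw [sub_eq_iff_eq_add]
      exact_mod_cast h
    rw [hsub, Int.natAbs_natCast]

/-- The factors `x + 1` and `x - 1` have no common prime divisor other than `2`. -/
theorem exists_two_pow_eq_add_one_or_sub_one {x q : ℕ} (hx : 1 < x) (hq : 2 < q)
    (h : ((x + 1) * (x - 1)).primeFactors ⊆ {2, q}) :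
    (∃ c, x + 1 = 2 ^ c) ∨ ∃ c, x - 1 = 2 ^ c := by
  have hpos : (x + 1) * (x - 1) ≠ 0 := mul_ne_zero (by omega) (by omega)
  by_cases hqx : q ∣ x + 1
  · right
    refine exists_eq_pow_of_primeFactors_subset_pair (by omega)
      ((Nat.primeFactors_mono (dvd_mul_left _ _) hpos).trans h) fun hqx' => ?_
    have hq2 : q ∣ 2 := by simpa [show x + 1 - (x - 1) = 2 by omega] using Nat.dvd_sub hqx hqx'
    exact absurd (Nat.le_of_dvd two_pos hq2) (by omega)
  · left
    exact exists_eq_pow_of_primeFactors_subset_pair (by omega)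
      ((Nat.primeFactors_mono (dvd_mul_right _ _) hpos).trans h) hqx

theorem eq_one_or_of_primeFactors_pow_two_mul_sub_one_subset {x s q : ℕ} (hx : Odd x)
    (hx1 : 1 < x) (hs : s ≠ 0) (hq : 2 < q) (h : (x ^ (2 * s) - 1).primeFactors ⊆ {2, q}) :
    s = 1 ∨ x = 3 ∧ s = 2 := by
  have hxs : 1 < x ^ s := Nat.one_lt_pow hs hx1
  have hfac : x ^ (2 * s) - 1 = (x ^ s + 1) * (x ^ s - 1) := by
    rw [mul_comm 2 s, pow_mul, ← Nat.sq_sub_sq, one_pow]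
  rcases exists_two_pow_eq_add_one_or_sub_one hxs hq (hfac ▸ h) with ⟨c, hc⟩ | ⟨c, hc⟩
  · exact Or.inl (eq_one_of_pow_add_one_eq_two_pow hx hx1 hs hc)
  · exact eq_one_or_of_pow_eq_two_pow_add_one hx hx1 hs (c := c) (by omega)

theorem padicValNat_geom_sum {q x n : ℕ} [Fact q.Prime] (hq : Odd q) (hx : 1 < x)
    (hqx : q ∣ x - 1) (hn : n ≠ 0) :
    padicValNat q (∑ i ∈ Finset.range n, x ^ i) = padicValNat q n := by
  have hqx' : ¬ q ∣ x := fun h => by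
    have hq1 : q ∣ 1 := by simpa [Nat.sub_sub_self hx.le] using Nat.dvd_sub h hqx
    exact (Fact.out : q.Prime).one_lt.ne' (Nat.dvd_one.1 hq1)
  have hsum : ∑ i ∈ Finset.range n, x ^ i ≠ 0 := (Finset.sum_pos (fun i _ => by positivity)
    (Finset.nonempty_range_iff.2 hn)).ne'
  have hlte := padicValNat.pow_sub_pow hq hx hqx hqx' hn
  rw [one_pow, ← geom_sum_mul_of_one_le hx.le n, padicValNat.mul hsum (by omega)] at hlte
  omega

theorem dvd_sub_one_of_dvd_pow_sub_one_of_coprime {q x r : ℕ} (hq : q.Prime) (hx : 0 < x)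
    (hr : r ≠ 0) (hcop : r.Coprime (q - 1)) (h : q ∣ x ^ r - 1) : q ∣ x - 1 := by
  have : Fact q.Prime := ⟨hq⟩
  have hcast : ∀ n, 0 < n → (q ∣ n - 1 ↔ (n : ZMod q) = 1) := fun n hn => by
    rw [← ZMod.natCast_eq_zero_iff, Nat.cast_sub hn, Nat.cast_one, sub_eq_zero]
  have hpow : (x : ZMod q) ^ r = 1 := by
    rw [← Nat.cast_pow]
    exact (hcast _ (by positivity)).1 h
  have hx0 : (x : ZMod q) ≠ 0 := by
    rintro h0
    simp [h0, hr] at hpow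
  rw [hcast x hx]
  simpa [hcop.gcd_eq_one] using pow_gcd_eq_one.2 ⟨hpow, ZMod.pow_card_sub_one_eq_one hx0⟩

/-- If `r > 1`, then `∑ x ^ i` is a power of `q`, and `r` being odd forces `x ≡ 1 [MOD q]`. By
lifting the exponent this power of `q` divides `r`, which is too small. -/
theorem eq_one_of_odd_of_primeFactors_pow_sub_one_subset {x r q : ℕ} (hx1 : 1 < x) (hx : Odd x)
    (hq : q.Prime) (hr : Odd r) (h : (x ^ r - 1).primeFactors ⊆ {2, q})
    (hqx : q - 1 ∣ x ^ r - 1) : r = 1 := by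
  by_contra hr1
  have : Fact q.Prime := ⟨hq⟩
  have hr0 : r ≠ 0 := hr.pos.ne'
  have hpos : x ^ r - 1 ≠ 0 := by
    have := Nat.one_lt_pow hr0 hx1
    omega
  set N := ∑ i ∈ Finset.range r, x ^ i
  have hNdvd : N ∣ x ^ r - 1 := geom_sum_mul_of_one_le hx1.le r ▸ dvd_mul_right _ _
  have hNodd : Odd N := odd_geom_sum hx hr
  have hrN : r < N := by
    calc r = ∑ _i ∈ Finset.range r, 1 := by simp
      _ < N := Finset.sum_lt_sum (fun i _ => Nat.one_le_pow _ _ (by omega))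
        ⟨1, Finset.mem_range.2 (by omega), by simpa using hx1⟩
  obtain ⟨k, hk⟩ : ∃ k, N = q ^ k := exists_eq_pow_of_primeFactors_subset_pair (b := 2) (by omega)
    ((Nat.primeFactors_mono hNdvd hpos).trans (Finset.pair_comm 2 q ▸ h)) hNodd.not_two_dvd_nat
  obtain ⟨c, hc⟩ : ∃ c, q - 1 = 2 ^ c := exists_eq_pow_of_primeFactors_subset_pair (b := q)
    (Nat.sub_ne_zero_of_lt hq.one_lt) ((Nat.primeFactors_mono hqx hpos).trans h)
    (Nat.not_dvd_of_pos_of_lt (Nat.sub_pos_of_lt hq.one_lt) (Nat.sub_lt hq.pos one_pos))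
  have hk0 : k ≠ 0 := by
    rintro rfl
    rw [pow_zero] at hk
    omega
  have hqx1 : q ∣ x - 1 := dvd_sub_one_of_dvd_pow_sub_one_of_coprime hq (by omega) hr0
    (hc ▸ (Nat.coprime_two_right.2 hr).pow_right c) ((hk ▸ dvd_pow_self q hk0).trans hNdvd)
  have hval : padicValNat q N = padicValNat q r :=
    padicValNat_geom_sum ((Nat.odd_pow_iff hk0).1 (hk ▸ hNodd)) hx1 hqx1 hr0
  rw [hk, padicValNat.prime_pow] at hval
  have hNr : N ∣ r := by
    rw [hk, hval]
    exact pow_padicValNat_dvd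
  exact hrN.not_ge (Nat.le_of_dvd hr.pos hNr)

theorem three_dvd_sq_sub_one {n : ℕ} (hn : ¬ 3 ∣ n) : 3 ∣ n ^ 2 - 1 := by
  have hmod : n % 3 = 1 ∨ n % 3 = 2 := by omega
  have hsq : n ^ 2 % 3 = 1 := by rcases hmod with h | h <;> simp [Nat.pow_mod, h]
  omega

theorem odd_of_even_pow_sub_one {n r : ℕ} (hn : n ≠ 0) (hr : r ≠ 0) (h : Even (n ^ r - 1)) :
    Odd n := by
  rw [← Nat.not_even_iff_odd, ← Nat.even_pow' hr]
  exact fun he => Nat.not_odd_iff_even.2 h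
    (Nat.Even.sub_odd (Nat.one_le_pow r n (Nat.pos_of_ne_zero hn)) he odd_one)

theorem eq_three_or_five_and_exponent_of_primeFactors_subset {p r q : ℕ} (hp : p.Prime)
    (hpodd : Odd p) (hq : q.Prime) (hqodd : Odd q) (hr : 2 ≤ r)
    (h : (p ^ r - 1).primeFactors ⊆ {2, q}) (hqp : q ∣ p ^ r - 1) (hqp1 : q - 1 ∣ p ^ r - 1) :
    (q = 3 ∨ q = 5) ∧ (r = 2 ∨ r = 4) := by
  have hq2 : q ≠ 2 := by
    rintro rfl
    exact absurd hqodd (by decide)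
  have hmem : ∀ {l : ℕ}, l.Prime → l ∣ p ^ r - 1 → l = 2 ∨ l = q := fun hl hlp => by
    have hpos := Nat.one_lt_pow (by omega : r ≠ 0) hp.one_lt
    simpa using h (Nat.mem_primeFactors.2 ⟨hl, hlp, by omega⟩)
  rcases Nat.even_or_odd' r with ⟨s, rfl | rfl⟩
  · rcases eq_one_or_of_primeFactors_pow_two_mul_sub_one_subset hpodd hp.one_lt (by omega)
      (hq.two_le.lt_of_ne' hq2) h with rfl | ⟨rfl, rfl⟩
    · have hp3 : ¬ 3 ∣ p := fun h3 => by
        obtain rfl := (Nat.prime_dvd_prime_iff_eq Nat.prime_three hp).1 h3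
        have hq8 : q ∣ 2 ^ 3 := by simpa using hqp
        exact hq2 ((Nat.prime_dvd_prime_iff_eq hq Nat.prime_two).1 (hq.dvd_of_dvd_pow hq8))
      have := hmem Nat.prime_three (three_dvd_sq_sub_one hp3)
      omega
    · have := hmem Nat.prime_five (by norm_num)
      omega
  · have := eq_one_of_odd_of_primeFactors_pow_sub_one_subset hp.one_lt hpodd hq
      (odd_two_mul_add_one s) h hqp1
    omega

end NumberTheory

section FixedPointFreeAction

/-- The group `A` acts *fixed-point-freely* on the group `K` by automorphisms: no nontrivial
element of `A` fixes a nontrivial element of `K`. -/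
def IsFixedPointFreeAction (A K : Type*) [Group A] [Group K] [MulDistribMulAction A K] : Prop :=
  ∀ a : A, a ≠ 1 → MonoidHom.FixedPointFree (MulDistribMulAction.toMonoidHom K a)

/-- The elements of order `n` of `K`, as a set stable under the automorphisms in `A`; its
cardinality is `orderCount K n` by definition. -/
def elementsOfOrder (A K : Type*) [Group A] [Group K] [MulDistribMulAction A K] (n : ℕ) :
    SubMulAction A K where
  carrier := {k | orderOf k = n}
  smul_mem' a k hk := ((MulDistribMulAction.toMulEquiv K a).orderOf_eq k).trans hk

theorem natCard_dvd_natCard_of_isCancelSMul (A X : Type*) [Group A] [MulAction A X]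
    [IsCancelSMul A X] : Nat.card A ∣ Nat.card X := by
  rw [Nat.card_congr (MulAction.selfEquivOrbitsQuotientProd (G := A) (X := X)
    IsCancelSMul.stabilizer_eq_bot), Nat.card_prod]
  exact dvd_mul_left _ _

theorem isPretransitive_of_natCard_eq {A X : Type*} [Group A] [MulAction A X] [IsCancelSMul A X]
    [Finite X] (h : Nat.card A = Nat.card X) : MulAction.IsPretransitive A X where
  exists_smul_eq x y :=
    have hinj : Function.Injective fun a : A => a • x := fun _ _ => IsCancelSMul.right_cancel _ _ x
    (hinj.bijective_of_nat_card_le h.ge).2 y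

theorem mul_comm_of_faithfulSMul_of_isCyclic {A K : Type*} [Group A] [Group K]
    [MulDistribMulAction A K] [FaithfulSMul A K] [IsCyclic K] (a b : A) : a * b = b * a := by
  have hinj : Function.Injective (MulDistribMulAction.toMulAut A K) := fun a b hab =>
    FaithfulSMul.eq_of_smul_eq_smul (DFunLike.congr_fun hab)
  refine hinj ((IsCyclic.mulAutMulEquiv K).injective ?_)
  simp only [map_mul, mul_comm]

variable {A K : Type*} [Group A] [Group K]

theorem orderCount_one : orderCount K 1 = 1 := by
  simp [orderCount, orderOf_eq_one_iff]

theorem orderCount_orderOf_ne_zero [Finite K] (x : K) : orderCount K (orderOf x) ≠ 0 := by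
  have : Nonempty {k : K // orderOf k = orderOf x} := ⟨⟨x, rfl⟩⟩
  exact Nat.card_pos.ne'

theorem orderCount_eq_zero_or_exists_orderOf_eq (n : ℕ) :
    orderCount K n = 0 ∨ ∃ x : K, orderOf x = n := by
  rcases isEmpty_or_nonempty {x : K // orderOf x = n} with h | ⟨⟨x, hx⟩⟩
  · exact Or.inl Nat.card_of_isEmpty
  · exact Or.inr ⟨x, hx⟩

namespace IsFixedPointFreeAction

variable [MulDistribMulAction A K]

theorem isCancelSMul (hAK : IsFixedPointFreeAction A K) {S : SubMulAction A K} (hS : 1 ∉ S) :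
    IsCancelSMul A S := by
  refine isCancelSMul_iff_eq_one_of_smul_eq.2 fun a k hak => ?_
  by_contra ha
  have hk : (k : K) = 1 := hAK a ha k (congrArg Subtype.val hak)
  exact hS (hk ▸ k.2)

theorem isCancelSMul_elementsOfOrder (hAK : IsFixedPointFreeAction A K) {n : ℕ} (hn : n ≠ 1) :
    IsCancelSMul A (elementsOfOrder A K n) :=
  hAK.isCancelSMul fun h => hn (h.symm.trans orderOf_one)

theorem faithfulSMul [Nontrivial K] (hAK : IsFixedPointFreeAction A K) : FaithfulSMul A K where
  eq_of_smul_eq_smul {a b} hab := by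
    obtain ⟨k, hk⟩ := exists_ne (1 : K)
    by_contra hne
    refine hk (hAK (b⁻¹ * a) (fun h => hne (inv_mul_eq_one.1 h).symm) k ?_)
    simp [mul_smul, hab k]

theorem natCard_dvd_orderCount (hAK : IsFixedPointFreeAction A K) {n : ℕ} (hn : n ≠ 1) :
    Nat.card A ∣ orderCount K n :=
  have := hAK.isCancelSMul_elementsOfOrder hn
  natCard_dvd_natCard_of_isCancelSMul A (elementsOfOrder A K n)

theorem natCard_coprime [Finite K] (hAK : IsFixedPointFreeAction A K) :
    (Nat.card A).Coprime (Nat.card K) := by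
  let S : SubMulAction A K := (elementsOfOrder A K 1)ᶜ
  have : IsCancelSMul A S := hAK.isCancelSMul fun h => h orderOf_one
  have hcard : 1 + Nat.card S = Nat.card K := by
    rw [← orderCount_one (K := K)]
    exact Set.ncard_add_ncard_compl (elementsOfOrder A K 1 : Set K)
  rw [← hcard]
  exact Nat.Coprime.coprime_dvd_left (natCard_dvd_natCard_of_isCancelSMul A S) (by simp)

theorem commute_of_even_natCard [Finite A] [Finite K] (hAK : IsFixedPointFreeAction A K)
    (hA : Even (Nat.card A)) (x y : K) : Commute x y := by
  have : Fact (Nat.Prime 2) := ⟨Nat.prime_two⟩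
  obtain ⟨a, ha⟩ := exists_prime_orderOf_dvd_card' 2 hA.two_dvd
  have ha1 : a ≠ 1 := fun h => by simp [h] at ha
  have haa : a * a = 1 := by rw [← sq, ← ha, pow_orderOf_eq_one]
  exact (hAK a ha1).commute_all_of_involutive (fun k => by simp [smul_smul, haa]) x y

theorem exists_mulEquiv_apply_eq [Finite K] (hAK : IsFixedPointFreeAction A K) {n : ℕ}
    (hn : n ≠ 1) (hA : Nat.card A = orderCount K n) {x y : K} (hx : orderOf x = n)
    (hy : orderOf y = n) : ∃ φ : K ≃* K, φ x = y := by
  have := hAK.isCancelSMul_elementsOfOrder hn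
  have : MulAction.IsPretransitive A (elementsOfOrder A K n) := isPretransitive_of_natCard_eq hA
  obtain ⟨a, ha⟩ := MulAction.exists_smul_eq A (⟨x, hx⟩ : elementsOfOrder A K n) ⟨y, hy⟩
  exact ⟨MulDistribMulAction.toMulEquiv K a, congrArg Subtype.val ha⟩

end IsFixedPointFreeAction

end FixedPointFreeAction

section OrderCount

theorem orderOf_pow_of_orderOf_eq_mul {K : Type*} [Monoid K] {x : K} {m n : ℕ} (hn : n ≠ 0)
    (hx : orderOf x = m * n) : orderOf (x ^ n) = m := by
  rw [orderOf_pow_of_dvd hn (hx ▸ dvd_mul_left n m), hx, Nat.mul_div_cancel _ (by omega)]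

theorem orderCount_mul_of_coprime {K : Type*} [CommGroup K] {m n : ℕ} (hm : m ≠ 0) (hn : n ≠ 0)
    (hmn : m.Coprime n) : orderCount K (m * n) = orderCount K m * orderCount K n := by
  let f : {z : K // orderOf z = m * n} → {x : K // orderOf x = m} × {y : K // orderOf y = n} :=
    fun z => (⟨z ^ n, orderOf_pow_of_orderOf_eq_mul hn z.2⟩,
      ⟨z ^ m, orderOf_pow_of_orderOf_eq_mul hm (z.2.trans (mul_comm m n))⟩)
  rw [orderCount, orderCount, orderCount, ← Nat.card_prod]
  refine Nat.card_congr (Equiv.ofBijective f ⟨fun z w hzw => ?_, ?_⟩)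
  · have hzwn : (z : K) ^ n = w ^ n := congrArg (fun p => (p.1 : K)) hzw
    have hzwm : (z : K) ^ m = w ^ m := congrArg (fun p => (p.2 : K)) hzw
    have hdiv : (z / w : K) ^ m.gcd n = 1 :=
      pow_gcd_eq_one.2 ⟨by rw [div_pow, hzwm, div_self'], by rw [div_pow, hzwn, div_self']⟩
    rw [hmn.gcd_eq_one, pow_one, div_eq_one] at hdiv
    exact Subtype.ext hdiv
  · rintro ⟨⟨x, rfl⟩, ⟨y, rfl⟩⟩
    obtain ⟨a, ha⟩ := exists_pow_eq_self_of_coprime hmn.symm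
    obtain ⟨b, hb⟩ := exists_pow_eq_self_of_coprime hmn
    have hzn : (x ^ a * y ^ b) ^ orderOf y = x := by
      rw [mul_pow, pow_right_comm y, pow_orderOf_eq_one, one_pow, mul_one, pow_right_comm, ha]
    have hzm : (x ^ a * y ^ b) ^ orderOf x = y := by
      rw [mul_pow, pow_right_comm x, pow_orderOf_eq_one, one_pow, one_mul, pow_right_comm, hb]
    refine ⟨⟨x ^ a * y ^ b, Nat.dvd_antisymm (orderOf_dvd_of_pow_eq_one ?_)
      (hmn.mul_dvd_of_dvd_of_dvd ?_ ?_)⟩, Prod.ext (Subtype.ext hzn) (Subtype.ext hzm)⟩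
    · rw [pow_mul, hzm, pow_orderOf_eq_one]
    · exact (congrArg orderOf hzn).symm.dvd.trans (orderOf_pow_dvd _)
    · exact (congrArg orderOf hzm).symm.dvd.trans (orderOf_pow_dvd _)

/-- The units of `ZMod n` act freely on the elements of order `n` by powers. -/
theorem totient_dvd_orderCount (K : Type*) [Group K] (n : ℕ) [NeZero n] :
    n.totient ∣ orderCount K n := by
  have hval : ∀ {g : K}, orderOf g = n → ∀ m : ℕ, g ^ (m : ZMod n).val = g ^ m := fun hg m => by
    rw [ZMod.val_natCast, ← hg, pow_mod_orderOf]
  let _ : MulAction (ZMod n)ˣ {g : K // orderOf g = n} :=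
    { smul := fun u g => ⟨g ^ (u : ZMod n).val, by
        rw [Nat.Coprime.orderOf_pow (g.2.symm ▸ (ZMod.val_coe_unit_coprime u).symm), g.2]⟩
      one_smul := fun g => Subtype.ext <| by
        change (g : K) ^ ((1 : (ZMod n)ˣ) : ZMod n).val = g
        simpa using hval g.2 1
      mul_smul := fun u v g => Subtype.ext <| by
        change (g : K) ^ ((u * v : (ZMod n)ˣ) : ZMod n).val =
          (g ^ (v : ZMod n).val) ^ (u : ZMod n).val
        rw [← pow_mul, ← hval g.2 (_ * _), Nat.cast_mul, ZMod.natCast_zmod_val,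
          ZMod.natCast_zmod_val, Units.val_mul, mul_comm] }
  have : IsCancelSMul (ZMod n)ˣ {g : K // orderOf g = n} :=
    isCancelSMul_iff_eq_one_of_smul_eq.2 fun u g hug => by
      have hpow : (g : K) ^ (u : ZMod n).val = g ^ 1 :=
        (congrArg Subtype.val hug).trans (pow_one _).symm
      rw [pow_eq_pow_iff_modEq, g.2, ← ZMod.natCast_eq_natCast_iff] at hpow
      exact Units.ext (by simpa using hpow)
  rw [← ZMod.card_units_eq_totient, ← Nat.card_eq_fintype_card]
  exact natCard_dvd_natCard_of_isCancelSMul (ZMod n)ˣ {g : K // orderOf g = n}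

theorem PerfectOrderClasses.orderCount_orderOf_dvd {G : Type*} [Group G] [Finite G]
    (hG : PerfectOrderClasses G) (g : G) : orderCount G (orderOf g) ∣ Nat.card G :=
  (hG _ (orderOf_pos g)).resolve_left (orderCount_orderOf_ne_zero g)

theorem PerfectOrderClasses.sub_one_dvd_natCard {G : Type*} [Group G] [Finite G]
    (hG : PerfectOrderClasses G) {q : ℕ} (hq : q.Prime) (hqG : q ∣ Nat.card G) :
    q - 1 ∣ Nat.card G := by
  have : Fact q.Prime := ⟨hq⟩
  obtain ⟨g, rfl⟩ := exists_prime_orderOf_dvd_card' q hqG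
  rw [← Nat.totient_prime hq]
  exact (totient_dvd_orderCount G _).trans (hG.orderCount_orderOf_dvd g)

end OrderCount

section Homocyclic

/-- A group is *homocyclic* of rank `r` over `p` if it is a direct product of `r` copies of a
cyclic group of order `p ^ k` for some positive `k`. -/
def IsHomocyclic (p r : ℕ) (K : Type*) [Group K] : Prop :=
  ∃ k : ℕ, 0 < k ∧ Nonempty (K ≃* (Fin r → Multiplicative (ZMod (p ^ k))))

theorem orderCount_congr {K L : Type*} [Group K] [Group L] (f : K ≃* L) (n : ℕ) :
    orderCount K n = orderCount L n :=
  Nat.card_congr (f.toEquiv.subtypeEquiv fun k => by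
    rw [MulEquiv.toEquiv_eq_coe, MulEquiv.coe_toEquiv, f.orderOf_eq])

theorem orderCount_prime_add_one {K : Type*} [CommGroup K] [Finite K] {p : ℕ} (hp : p.Prime) :
    orderCount K p + 1 = Nat.card (powMonoidHom p : K →* K).ker := by
  have : Fact p.Prime := ⟨hp⟩
  have hker : ((powMonoidHom p : K →* K).ker : Set K) = insert 1 {k : K | orderOf k = p} := by
    ext k
    by_cases hk : k = 1 <;> simp [hk, orderOf_eq_prime_iff]
  have hone : (1 : K) ∉ {k : K | orderOf k = p} := by simp [hp.ne_one.symm]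
  exact (hker ▸ Set.ncard_insert_of_notMem hone).symm

theorem prime_dvd_orderCount_add_one {K : Type*} [CommGroup K] [Finite K] {p : ℕ} (hp : p.Prime)
    (hpK : p ∣ Nat.card K) : p ∣ orderCount K p + 1 := by
  have : Fact p.Prime := ⟨hp⟩
  obtain ⟨x, hx⟩ := exists_prime_orderOf_dvd_card' p hpK
  have hker : x ∈ (powMonoidHom p : K →* K).ker := hx ▸ pow_orderOf_eq_one x
  calc
    p = orderOf (⟨x, hker⟩ : (powMonoidHom p : K →* K).ker) := by rw [Subgroup.orderOf_mk, hx]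
    _ ∣ Nat.card (powMonoidHom p : K →* K).ker := orderOf_dvd_natCard _
    _ = orderCount K p + 1 := (orderCount_prime_add_one hp).symm

theorem IsHomocyclic.orderCount_add_one {p r : ℕ} {K : Type*} [Group K] (hp : p.Prime)
    (hK : IsHomocyclic p r K) : orderCount K p + 1 = p ^ r := by
  obtain ⟨k, hk, ⟨f⟩⟩ := hK
  have : NeZero (p ^ k) := ⟨pow_ne_zero k hp.ne_zero⟩
  let C := Multiplicative (ZMod (p ^ k))
  have hker : (powMonoidHom p : (Fin r → C) →* _).ker ≃ (Fin r → (powMonoidHom p : C →* C).ker) :=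
    (Equiv.subtypeEquivRight fun _ => funext_iff).trans
      (Equiv.subtypePiEquivPi (p := fun _ (c : C) => c ^ p = 1))
  have hcard : Nat.card (powMonoidHom p : C →* C).ker = p := by
    rw [IsCyclic.card_powMonoidHom_ker, Nat.card_congr Multiplicative.toAdd, Nat.card_zmod]
    exact Nat.gcd_eq_right (dvd_pow_self p hk.ne')
  rw [orderCount_congr f, orderCount_prime_add_one hp, Nat.card_congr hker, Nat.card_fun, hcard,
    Nat.card_fin]

theorem exists_mulEquiv_pi_zmod_prime_pow (K : Type*) [CommGroup K] [Finite K] {p m : ℕ}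
    (hp : p.Prime) (hK : Nat.card K = p ^ m) :
    ∃ (r : ℕ) (e : Fin r → ℕ), (∀ i, 0 < e i) ∧
      Nonempty (K ≃* ∀ i, Multiplicative (ZMod (p ^ e i))) := by
  obtain ⟨ι, _, n, hn, ⟨f⟩⟩ := CommGroup.equiv_prod_multiplicative_zmod_of_finite K
  have hprod : ∏ i, n i = p ^ m := by
    simp only [← hK, Nat.card_congr f.toEquiv, Nat.card_pi,
      Nat.card_congr Multiplicative.toAdd, Nat.card_zmod]
  have hpow (i : ι) : ∃ e, n i = p ^ e := by
    obtain ⟨e, -, he⟩ := (Nat.dvd_prime_pow hp).1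
      (hprod ▸ Finset.dvd_prod_of_mem n (Finset.mem_univ i))
    exact ⟨e, he⟩
  choose e he using hpow
  obtain rfl : n = fun i => p ^ e i := funext he
  let σ := (Fintype.equivFin ι).symm
  let reindex : (∀ i, Multiplicative (ZMod (p ^ e i))) ≃*
      ∀ i, Multiplicative (ZMod (p ^ e (σ i))) :=
    { (Equiv.piCongrLeft (fun i => Multiplicative (ZMod (p ^ e i))) σ).symm with
      map_mul' := fun _ _ => rfl }
  refine ⟨Fintype.card ι, e ∘ σ, fun i => Nat.pos_of_ne_zero fun h => ?_, ⟨f.trans reindex⟩⟩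
  exact (hn (σ i)).ne' (by simpa using congrArg (p ^ ·) h)

/-- The elements of order `p` of the `i`th factor are `p ^ (e i - 1)`-th powers, and automorphisms
preserve this property. -/
theorem exponent_eq_of_transitive {ι : Type*} {p : ℕ} (hp : p.Prime) {e : ι → ℕ}
    (he : ∀ i, 0 < e i)
    (htrans : ∀ x y : ∀ i, Multiplicative (ZMod (p ^ e i)), orderOf x = p → orderOf y = p →
      ∃ φ : (∀ i, Multiplicative (ZMod (p ^ e i))) ≃* (∀ i, Multiplicative (ZMod (p ^ e i))),
        φ x = y) (i j : ι) : e i = e j := by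
  classical
  suffices hle : ∀ i j, e i ≤ e j from le_antisymm (hle i j) (hle j i)
  clear i j
  intro i j
  let u (i : ι) : ∀ i, Multiplicative (ZMod (p ^ e i)) := Pi.mulSingle i (Multiplicative.ofAdd 1)
  have hone (i : ι) : orderOf (Multiplicative.ofAdd (1 : ZMod (p ^ e i))) = p ^ e i := by
    rw [orderOf_ofAdd_eq_addOrderOf, ZMod.addOrderOf_one]
  have hu (i : ι) : orderOf (u i ^ p ^ (e i - 1)) = p := by
    refine orderOf_pow_of_orderOf_eq_mul (pow_ne_zero _ hp.ne_zero) ?_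
    rw [mul_pow_sub_one (he i).ne', orderOf_piMulSingle, hone]
  obtain ⟨φ, hφ⟩ := htrans _ _ (hu i) (hu j)
  by_contra! hlt
  have hpow : (φ (u i) j) ^ p ^ (e i - 1) = 1 := by
    refine orderOf_dvd_iff_pow_eq_one.1 ((orderOf_dvd_natCard _).trans ?_)
    rw [Nat.card_congr Multiplicative.toAdd, Nat.card_zmod]
    exact pow_dvd_pow p (by omega)
  have huj : u j j = Multiplicative.ofAdd 1 := Pi.mulSingle_eq_same j _
  rw [← Pi.pow_apply, ← map_pow, hφ, Pi.pow_apply, huj,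
    ← orderOf_dvd_iff_pow_eq_one, hone, Nat.pow_dvd_pow_iff_le_right hp.one_lt] at hpow
  have := he j
  omega

theorem exists_isHomocyclic_of_transitive {K : Type*} [CommGroup K] [Finite K] [Nontrivial K]
    {p m : ℕ} (hp : p.Prime) (hK : Nat.card K = p ^ m)
    (htrans : ∀ x y : K, orderOf x = p → orderOf y = p → ∃ φ : K ≃* K, φ x = y) :
    ∃ r, IsHomocyclic p r K := by
  obtain ⟨r, e, he, ⟨f⟩⟩ := exists_mulEquiv_pi_zmod_prime_pow K hp hK
  have heq := exponent_eq_of_transitive hp he fun x y hx hy => by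
    obtain ⟨φ, hφ⟩ := htrans (f.symm x) (f.symm y) ((f.symm.orderOf_eq x).trans hx)
      ((f.symm.orderOf_eq y).trans hy)
    exact ⟨f.symm.trans (φ.trans f), by simp [hφ]⟩
  obtain ⟨i⟩ : Nonempty (Fin r) := by
    by_contra! h
    exact not_subsingleton K f.injective.subsingleton
  obtain ⟨k, rfl⟩ : ∃ k, e = fun _ => k := ⟨e i, funext fun j => heq j i⟩
  exact ⟨r, k, he i, ⟨f⟩⟩

namespace IsFixedPointFreeAction

variable {A K : Type*} [Group A] [CommGroup K] [Finite K] [MulDistribMulAction A K]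

/-- If distinct primes `p` and `l` divided `|K|`, then `|A| ^ 2` would divide the number of
elements of order `p * l`, hence `|K| |A|`, although `|A|` is coprime to `|K|`. -/
theorem exists_natCard_eq_prime_pow [Finite A] [Nontrivial A] [Nontrivial K]
    (hAK : IsFixedPointFreeAction A K)
    (hK : ∀ k : K, orderCount K (orderOf k) ∣ Nat.card K * Nat.card A) :
    ∃ p m : ℕ, p.Prime ∧ p ∣ Nat.card K ∧ Nat.card K = p ^ m := by
  obtain ⟨p, hp, hpK⟩ := Nat.exists_prime_and_dvd (Finite.one_lt_card (α := K)).ne'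
  refine ⟨p, _, hp, hpK, Nat.eq_prime_pow_of_unique_prime_dvd Nat.card_pos.ne' ?_⟩
  intro l hl hlK
  by_contra hlp
  have : Fact p.Prime := ⟨hp⟩
  have : Fact l.Prime := ⟨hl⟩
  have hpl : p.Coprime l := (Nat.coprime_primes hp hl).2 (Ne.symm hlp)
  obtain ⟨x, hx⟩ := exists_prime_orderOf_dvd_card' p hpK
  obtain ⟨y, hy⟩ := exists_prime_orderOf_dvd_card' l hlK
  have hxy : orderOf (x * y) = p * l := by
    rw [(Commute.all x y).orderOf_mul_eq_mul_orderOf_of_coprime (by rwa [hx, hy]), hx, hy]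
  have hsq : Nat.card A * Nat.card A ∣ Nat.card K * Nat.card A := calc
    Nat.card A * Nat.card A ∣ orderCount K p * orderCount K l :=
      mul_dvd_mul (hAK.natCard_dvd_orderCount hp.ne_one) (hAK.natCard_dvd_orderCount hl.ne_one)
    _ = orderCount K (orderOf (x * y)) := by
      rw [hxy, orderCount_mul_of_coprime hp.ne_zero hl.ne_zero hpl]
    _ ∣ Nat.card K * Nat.card A := hK (x * y)
  have hdvd : Nat.card A ∣ Nat.card K := Nat.dvd_of_mul_dvd_mul_right Nat.card_pos hsq
  exact (Finite.one_lt_card (α := A)).ne'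
    (Nat.eq_one_of_dvd_coprimes hAK.natCard_coprime dvd_rfl hdvd)

theorem natCard_eq_orderCount (hAK : IsFixedPointFreeAction A K) {p m : ℕ} (hp : p.Prime)
    (hpK : p ∣ Nat.card K) (hm : Nat.card K = p ^ m)
    (hdvd : orderCount K p ∣ Nat.card K * Nat.card A) : Nat.card A = orderCount K p := by
  refine Nat.dvd_antisymm (hAK.natCard_dvd_orderCount hp.ne_one) ?_
  have hcop : p.Coprime (orderCount K p) := (Nat.Prime.coprime_iff_not_dvd hp).2 fun h =>
    hp.not_dvd_one ((Nat.dvd_add_right h).1 (prime_dvd_orderCount_add_one hp hpK))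
  exact (hm ▸ hcop.symm.pow_right m).dvd_of_dvd_mul_left hdvd

theorem exists_isHomocyclic [Finite A] [Nontrivial A] [Nontrivial K]
    (hAK : IsFixedPointFreeAction A K)
    (hK : ∀ k : K, orderCount K (orderOf k) ∣ Nat.card K * Nat.card A) :
    ∃ p r : ℕ, p.Prime ∧ IsHomocyclic p r K ∧ Nat.card A = p ^ r - 1 := by
  obtain ⟨p, m, hp, hpK, hm⟩ := hAK.exists_natCard_eq_prime_pow hK
  have : Fact p.Prime := ⟨hp⟩
  obtain ⟨x, hx⟩ := exists_prime_orderOf_dvd_card' p hpK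
  have hA : Nat.card A = orderCount K p := hAK.natCard_eq_orderCount hp hpK hm (hx ▸ hK x)
  obtain ⟨r, hr⟩ := exists_isHomocyclic_of_transitive hp hm fun _ _ =>
    hAK.exists_mulEquiv_apply_eq hp.ne_one hA
  exact ⟨p, r, hp, hr, hA.trans (Nat.eq_sub_of_add_eq (hr.orderCount_add_one hp))⟩

end IsFixedPointFreeAction

end Homocyclic

section Frobenius

theorem dvd_natCard_of_not_isNilpotent {G : Type*} [Group G] [Finite G] {p q : ℕ}
    (hp : p.Prime) (hG : ¬ Group.IsNilpotent G) (hpq : (Nat.card G).primeFactors ⊆ {p, q}) :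
    q ∣ Nat.card G := by
  by_contra hq
  obtain ⟨m, hm⟩ := exists_eq_pow_of_primeFactors_subset_pair Nat.card_pos.ne' hpq hq
  have : Fact p.Prime := ⟨hp⟩
  exact hG (IsPGroup.of_card hm).isNilpotent

theorem orderCount_eq_of_coprime_index {G : Type*} [Group G] (K : Subgroup G) [K.Normal] {n : ℕ}
    (hn : n.Coprime K.index) : orderCount G n = orderCount K n := by
  have hmem {g : G} (hg : orderOf g = n) : g ∈ K := by
    rw [← QuotientGroup.eq_one_iff, ← orderOf_eq_one_iff]
    exact Nat.eq_one_of_dvd_coprimes hn (hg ▸ orderOf_map_dvd (QuotientGroup.mk' K) g)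
      (orderOf_dvd_natCard _)
  exact Nat.card_congr
    { toFun := fun g => ⟨⟨g, hmem g.2⟩, (Subgroup.orderOf_mk _ _).trans g.2⟩
      invFun := fun k => ⟨k, (Subgroup.orderOf_coe k.1).trans k.2⟩
      left_inv := fun _ => rfl
      right_inv := fun _ => rfl }

/-- The action of a subgroup `H` on a normal subgroup `K` by conjugation. -/
abbrev conjAction {G : Type*} [Group G] (K H : Subgroup G) [K.Normal] : MulDistribMulAction H K :=
  MulDistribMulAction.compHom K ((MulAut.conjNormal (H := K)).comp H.subtype)

namespace IsFrobeniusWith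

variable {G : Type*} [Group G] {K H : Subgroup G}

theorem normal (hF : IsFrobeniusWith K H) : K.Normal := hF.2.2.1

theorem isComplement' (hF : IsFrobeniusWith K H) : K.IsComplement' H := by
  obtain ⟨-, -, -, hinf, hsup, -⟩ := hF
  refine Subgroup.isComplement'_of_disjoint_and_mul_eq_univ (disjoint_iff.2 hinf)
    (Set.eq_univ_of_forall fun g => ?_)
  obtain ⟨k, hk, h, hh, rfl⟩ := hsup g
  exact Set.mul_mem_mul hk hh

theorem nontrivial_kernel (hF : IsFrobeniusWith K H) : Nontrivial K :=
  K.nontrivial_iff_ne_bot.2 hF.1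

theorem isFixedPointFreeAction [K.Normal] (hF : IsFrobeniusWith K H) :
    letI := conjAction K H
    IsFixedPointFreeAction H K := by
  intro h hh k hk
  by_contra hk1
  exact hF.2.2.2.2.2 h h.2 (by simpa using hh) k k.2 (by simpa using hk1) (congrArg Subtype.val hk)

theorem natCard_coprime [Finite G] (hF : IsFrobeniusWith K H) :
    (Nat.card H).Coprime (Nat.card K) :=
  have := hF.normal
  letI := conjAction K H
  hF.isFixedPointFreeAction.natCard_coprime

theorem orderCount_kernel_dvd [Finite G] (hF : IsFrobeniusWith K H) (hG : PerfectOrderClasses G)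
    (k : K) : orderCount K (orderOf k) ∣ Nat.card K * Nat.card H := by
  have := hF.normal
  have hcop : (orderOf k).Coprime K.index := by
    rw [hF.isComplement'.symm.index_eq_card]
    exact hF.natCard_coprime.symm.coprime_dvd_left (orderOf_dvd_natCard k)
  rw [hF.isComplement'.card_mul_card, ← orderCount_eq_of_coprime_index K hcop,
    ← Subgroup.orderOf_coe]
  exact hG.orderCount_orderOf_dvd _

theorem exists_isHomocyclic_kernel [Finite G] (hF : IsFrobeniusWith K H)
    (hG : PerfectOrderClasses G) (hH : Even (Nat.card H)) :
    ∃ p r : ℕ, p.Prime ∧ IsHomocyclic p r K ∧ Nat.card H = p ^ r - 1 := by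
  have := hF.normal
  have := hF.nontrivial_kernel
  have : Nontrivial H := Finite.one_lt_card_iff_nontrivial.1 (Nat.le_of_dvd Nat.card_pos hH.two_dvd)
  let _ := conjAction K H
  let _ : CommGroup K :=
    { (inferInstance : Group K) with
      mul_comm := hF.isFixedPointFreeAction.commute_of_even_natCard hH }
  exact hF.isFixedPointFreeAction.exists_isHomocyclic (hF.orderCount_kernel_dvd hG)

theorem isNilpotent_of_isCyclic_kernel [IsCyclic K] (hF : IsFrobeniusWith K H) :
    Group.IsNilpotent H := by
  have := hF.normal
  have := hF.nontrivial_kernel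
  let _ := conjAction K H
  have := hF.isFixedPointFreeAction.faithfulSMul
  let _ : CommGroup H :=
    { (inferInstance : Group H) with
      mul_comm := mul_comm_of_faithfulSMul_of_isCyclic (K := K) }
  exact CommGroup.isNilpotent

theorem two_le_rank_of_not_isNilpotent [Finite G] (hF : IsFrobeniusWith K H) {p r : ℕ}
    (hK : IsHomocyclic p r K) (hcard : Nat.card H = p ^ r - 1)
    (hH : ¬ Group.IsNilpotent H) : 2 ≤ r := by
  by_contra! hr
  interval_cases r
  · exact Nat.card_pos.ne' hcard
  · obtain ⟨k, -, ⟨f⟩⟩ := hK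
    have : IsCyclic K := (f.trans (MulEquiv.funUnique (Fin 1) _)).isCyclic.2 inferInstance
    exact hH hF.isNilpotent_of_isCyclic_kernel

theorem exists_conj_eq_mul [Finite G] (hF : IsFrobeniusWith K H) {h : H} (hh : h ≠ 1) (k : K) :
    ∃ x : K, (x * h * x⁻¹ : G) = k * h := by
  have := hF.normal
  let _ := conjAction K H
  obtain ⟨x, hx⟩ := (hF.isFixedPointFreeAction h hh).commutatorMap_surjective k
  have hxk : (x / (h * x * h⁻¹) : G) = k := congrArg Subtype.val hx
  exact ⟨x, by rw [← hxk]; simp [div_eq_mul_inv, mul_assoc]⟩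

theorem orderOf_mul_eq [Finite G] (hF : IsFrobeniusWith K H) {h : H} (hh : h ≠ 1) (k : K) :
    orderOf (k * h : G) = orderOf h := by
  obtain ⟨x, hx⟩ := hF.exists_conj_eq_mul hh k
  rw [← hx, ← Subgroup.orderOf_coe]
  exact (MulAut.conj (x : G)).orderOf_eq h

theorem orderCount_eq_natCard_mul [Finite G] (hF : IsFrobeniusWith K H) {n : ℕ} (hn : n ≠ 1)
    (hnK : n.Coprime (Nat.card K)) : orderCount G n = Nat.card K * orderCount H n := by
  have hiff (h : H) (k : K) : orderOf h = n ↔ orderOf (k * h : G) = n := by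
    rcases eq_or_ne h 1 with rfl | hh
    · have hk : orderOf k ≠ n := fun hk =>
        hn (Nat.eq_one_of_dvd_coprimes hnK dvd_rfl (hk ▸ orderOf_dvd_natCard k))
      simp [hk, hn.symm]
    · rw [hF.orderOf_mul_eq hh]
  let e : H × K ≃ G := (Equiv.prodComm H K).trans (Equiv.ofBijective _ hF.isComplement')
  rw [orderCount, orderCount, mul_comm, ← Nat.card_prod]
  exact Nat.card_congr ((e.subtypeEquiv fun x => hiff x.1 x.2).symm.trans
    Equiv.prodSubtypeFstEquivSubtypeProd)

theorem perfectOrderClasses_complement [Finite G] (hF : IsFrobeniusWith K H)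
    (hG : PerfectOrderClasses G) : PerfectOrderClasses H := by
  intro n _
  rcases eq_or_ne n 1 with rfl | hn1
  · exact Or.inr ((orderCount_one (K := H)).symm ▸ one_dvd _)
  refine (orderCount_eq_zero_or_exists_orderOf_eq n).imp_right ?_
  rintro ⟨h, rfl⟩
  have hcop : (orderOf h).Coprime (Nat.card K) :=
    hF.natCard_coprime.coprime_dvd_left (orderOf_dvd_natCard h)
  refine Nat.dvd_of_mul_dvd_mul_left (Nat.card_pos (α := K)) ?_
  rw [← hF.orderCount_eq_natCard_mul hn1 hcop, hF.isComplement'.card_mul_card,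
    ← Subgroup.orderOf_coe]
  exact hG.orderCount_orderOf_dvd _

end IsFrobeniusWith

end Frobenius

/-- If a finite Frobenius group with perfect order classes has a non-nilpotent Frobenius
complement that is a `{2,q}`-group for an odd prime `q`, then `q = 3` or `q = 5`, and the
Frobenius kernel is homocyclic of rank 2 or 4 over an odd prime. -/
theorem frobenius_perfectOrderClasses_two_q_complement
    {G : Type*} [Group G] [Fintype G] (K H : Subgroup G)
    (hFrob : IsFrobeniusWith K H) (hpoc : PerfectOrderClasses G)
    (q : ℕ) (hq : q.Prime) (hqodd : Odd q)
    (hnotnil : ¬ Group.IsNilpotent H)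
    (hdiv : ∀ p : ℕ, p.Prime → p ∣ Nat.card H → p = 2 ∨ p = q) :
    (q = 3 ∨ q = 5) ∧
      ∃ p k r : ℕ, p.Prime ∧ Odd p ∧ 0 < k ∧ (r = 2 ∨ r = 4) ∧
        Nonempty (K ≃* (Fin r → Multiplicative (ZMod (p ^ k)))) := by
  have hH : (Nat.card H).primeFactors ⊆ {2, q} := fun l hl => by
    simpa using hdiv l (Nat.prime_of_mem_primeFactors hl) (Nat.dvd_of_mem_primeFactors hl)
  have hqH : q ∣ Nat.card H := dvd_natCard_of_not_isNilpotent Nat.prime_two hnotnil hH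
  have heven : Even (Nat.card H) := even_iff_two_dvd.2
    (dvd_natCard_of_not_isNilpotent hq hnotnil (Finset.pair_comm 2 q ▸ hH))
  have hq1H : q - 1 ∣ Nat.card H :=
    (hFrob.perfectOrderClasses_complement hpoc).sub_one_dvd_natCard hq hqH
  obtain ⟨p, r, hp, hK, hcard⟩ := hFrob.exists_isHomocyclic_kernel hpoc heven
  have hr : 2 ≤ r := hFrob.two_le_rank_of_not_isNilpotent hK hcard hnotnil
  have hpodd : Odd p :=
    odd_of_even_pow_sub_one hp.ne_zero (by omega) (hcard ▸ heven)
  rw [hcard] at hH hqH hq1H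
  obtain ⟨hq35, hr24⟩ :=
    eq_three_or_five_and_exponent_of_primeFactors_subset hp hpodd hq hqodd hr hH hqH hq1H
  obtain ⟨k, hk, hKk⟩ := hK
  exact ⟨hq35, p, k, r, hp, hpodd, hk, hr24, hKk⟩
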